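/- In Z, for all X, Y ⊆ S ∖ I and all distinct x, y ∈ I: if X;Y contains some element u with dom u = x and rg u = y, then X;Y contains every element v ∈ S with dom v = x and rg v = y. In particular, the composition of two sets of diversity atoms splits no pair of distinct identity atoms. -/

import Mathlib

open FirstOrder FirstOrder.Language

/-- Relation symbols of the language of atom structures: a unary `I`,
a binary `C` and a ternary `P`. -/
inductive AtomRel : ℕ → Type
  | I : AtomRel 1
  | C : AtomRel 2
  | P : AtomRel 3

/-- The first-order language with one ternary relation symbol `P`, one binary
relation symbol `C` and one unary relation symbol `I`. -/
def atomLang : FirstOrder.Language :=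
  ⟨fun _ => Empty, AtomRel⟩

/-- Function symbols of the language of the term algebras: a constant `1'`,
unary symbols `−` (complement) and `⁻` (converse), binary symbols `+` and `;`. -/
inductive AlgFun : ℕ → Type
  | one : AlgFun 0
  | compl : AlgFun 1
  | conv : AlgFun 1
  | add : AlgFun 2
  | comp : AlgFun 2

/-- The first-order language with binary operations `+` and `;`, unary
operations `−` and `⁻`, and a constant `1'`. -/
def algLang : FirstOrder.Language :=
  ⟨AlgFun, fun _ => Empty⟩

section Generic

variable {M : Type} [atomLang.Structure M]

/-- The interpretation of the unary relation symbol `I`. -/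
def mI (a : M) : Prop := Structure.RelMap (L := atomLang) (AtomRel.I : atomLang.Relations 1) ![a]

/-- The interpretation of the binary relation symbol `C`. -/
def mC (a b : M) : Prop := Structure.RelMap (L := atomLang) (AtomRel.C : atomLang.Relations 2) ![a, b]

/-- The interpretation of the ternary relation symbol `P`. -/
def mP (a b c : M) : Prop := Structure.RelMap (L := atomLang) (AtomRel.P : atomLang.Relations 3) ![a, b, c]

/-- `X ; Y = {u : ∃ x ∈ X, y ∈ Y, P(x,y,u)}`. -/
def sComp (X Y : Set M) : Set M := {u | ∃ x ∈ X, ∃ y ∈ Y, mP x y u}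

/-- `X⁻ = {u : ∃ x ∈ X, C(x,u)}`. -/
def sConv (X : Set M) : Set M := {u | ∃ x ∈ X, mC x u}

/-- The set of elements satisfying `I`. -/
def idSet (M : Type) [atomLang.Structure M] : Set M := {a | mI a}

end Generic

/-- Membership in the term algebra: the smallest collection of subsets of `M`
containing all singletons and the set `I`, closed under binary union,
complementation, `;` and `⁻`. -/
inductive InTA (M : Type) [atomLang.Structure M] : Set M → Prop
  | sing (a : M) : InTA M {a}
  | idset : InTA M (idSet M)
  | union {X Y : Set M} : InTA M X → InTA M Y → InTA M (X ∪ Y)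
  | compl {X : Set M} : InTA M X → InTA M Xᶜ
  | comp {X Y : Set M} : InTA M X → InTA M Y → InTA M (sComp X Y)
  | conv {X : Set M} : InTA M X → InTA M (sConv X)

/-- The term algebra of an atom structure, as a type. -/
def TermAlg (M : Type) [atomLang.Structure M] : Type := {X : Set M // InTA M X}

/-- The term algebra as a structure in the language `algLang`:
`+` is union, `−` is complement, `;` and `⁻` are the operations defined from
`P` and `C`, and `1'` is the set `I`. -/
instance termAlgStructure (M : Type) [atomLang.Structure M] :
    algLang.Structure (TermAlg M) where
  funMap := fun {_} f v =>
    match f with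
    | .one => ⟨idSet M, InTA.idset⟩
    | .compl => ⟨(v 0).1ᶜ, InTA.compl (v 0).2⟩
    | .conv => ⟨sConv (v 0).1, InTA.conv (v 0).2⟩
    | .add => ⟨(v 0).1 ∪ (v 1).1, InTA.union (v 0).2 (v 1).2⟩
    | .comp => ⟨sComp (v 0).1 (v 1).1, InTA.comp (v 0).2 (v 1).2⟩
  RelMap := fun {_} r _ => r.elim

/-- `a` goes from `x` to `y` when `P(x,a,a)` and `P(a,y,a)`. -/
def goes {M : Type} [atomLang.Structure M] (a x y : M) : Prop := mP x a a ∧ mP a y a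

/-- `X` splits the pair `(x,y)` when some `a ∈ X` and some `b ∉ X` both go
from `x` to `y`. -/
def SplitsG {M : Type} [atomLang.Structure M] (X : Set M) (x y : M) : Prop :=
  ∃ a ∈ X, ∃ b ∉ X, goes a x y ∧ goes b x y

/-- The pair `(x,y)` is splitable when `x ≠ y` and at least two distinct
elements go from `x` to `y`. -/
def SplitableG {M : Type} [atomLang.Structure M] (x y : M) : Prop :=
  x ≠ y ∧ ∃ a b : M, a ≠ b ∧ goes a x y ∧ goes b x y

/-- Converse of a binary relation, as a set of pairs. -/
def relConv {U : Type} (R : Set (U × U)) : Set (U × U) := {p | (p.2, p.1) ∈ R}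

/-- Composition of binary relations, as sets of pairs. -/
def relComp {U : Type} (R T : Set (U × U)) : Set (U × U) :=
  {p | ∃ w, (p.1, w) ∈ R ∧ (w, p.2) ∈ T}

/-- An atom structure is completely representable. -/
def CompRep (M : Type) [atomLang.Structure M] : Prop :=
  ∃ (U : Type) (rep : M → Set (U × U)),
    (∀ a : M, (rep a).Nonempty) ∧
    (∀ a b : M, a ≠ b → Disjoint (rep a) (rep b)) ∧
    (⋃ a : M, rep a) = Set.univ ∧
    (∀ a : M, (mI a ↔ rep a ⊆ Set.diagonal U) ∧
      ((rep a ⊆ Set.diagonal U) ↔ (rep a ∩ Set.diagonal U).Nonempty)) ∧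
    (∀ a b : M, (mC a b ↔ rep b = relConv (rep a)) ∧
      ((rep b = relConv (rep a)) ↔ (rep b ∩ relConv (rep a)).Nonempty)) ∧
    (∀ a b c : M, (mP a b c ↔ rep c ⊆ relComp (rep a) (rep b)) ∧
      ((rep c ⊆ relComp (rep a) (rep b)) ↔ (rep c ∩ relComp (rep a) (rep b)).Nonempty))
/-- The atoms of the atom structure `Z`: identity atoms `id n i` (`i ≤ n`),
split atoms `r n k` and their converses `rc n k` (`1 ≤ k ≤ n`), and
atoms `w n i m j` (`i ≤ n`, `j ≤ m`).  Distinct constructor applications give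
pairwise distinct elements. -/
inductive Atom : Type
  | id : (n i : ℕ) → i ≤ n → Atom
  | r : (n k : ℕ) → 1 ≤ k → k ≤ n → Atom
  | rc : (n k : ℕ) → 1 ≤ k → k ≤ n → Atom
  | w : (n i m j : ℕ) → i ≤ n → j ≤ m → Atom

/-- The domain function of `Z`. -/
def Atom.dom : Atom → Atom
  | .id n i h => .id n i h
  | .r n _ _ _ => .id n 0 (Nat.zero_le n)
  | .rc n k _ h2 => .id n k h2
  | .w n i _ _ hi _ => .id n i hi

/-- The range function of `Z`. -/
def Atom.rg : Atom → Atom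
  | .id n i h => .id n i h
  | .r n k _ h2 => .id n k h2
  | .rc n _ _ _ => .id n 0 (Nat.zero_le n)
  | .w _ _ m j _ hj => .id m j hj

/-- Membership in the set `I` of identity atoms of `Z`. -/
def Atom.isId : Atom → Prop
  | .id _ _ _ => True
  | _ => False

/-- The converse function on atoms of `Z`. -/
def Atom.cnv : Atom → Atom
  | .id n i h => .id n i h
  | .r n k h1 h2 => .rc n k h1 h2
  | .rc n k h1 h2 => .r n k h1 h2
  | .w n i m j hi hj => .w m j n i hj hi

/-- The binary relation `C` of `Z`: it consists of the pairs `(x,x)` for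
`x ∈ I`, `(r n k, rc n k)`, `(rc n k, r n k)` and `(w n i m j, w m j n i)`,
i.e. exactly the pairs `(a, cnv a)`. -/
def Crel (a b : Atom) : Prop := b = Atom.cnv a

/-- The ternary relation `P` of `Z`: the triples `(dom a, a, a)` and
`(a, rg a, a)` for `a ∈ S`, the triples `(a, b, dom a)` for `(a,b) ∈ C`, and
the triples `(a,b,c)` of non-identity atoms with `dom a = dom c`,
`rg a = dom b`, `rg b = rg c`. -/
def Prel (a b c : Atom) : Prop :=
  (a = b.dom ∧ c = b) ∨
  (b = a.rg ∧ c = a) ∨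
  (Crel a b ∧ c = a.dom) ∨
  (¬ a.isId ∧ ¬ b.isId ∧ ¬ c.isId ∧ a.dom = c.dom ∧ a.rg = b.dom ∧ b.rg = c.rg)

/-- `Z` as a structure for the language `atomLang`. -/
instance atomStructureZ : atomLang.Structure Atom where
  funMap := fun {_} f _ => f.elim
  RelMap := fun {_} r v =>
    match r with
    | AtomRel.I => (v 0).isId
    | AtomRel.C => Crel (v 0) (v 1)
    | AtomRel.P => Prel (v 0) (v 1) (v 2)

/-- `X ⊆ S` splits the pair `(x,y)` if there are `a ∈ X` and `b ∉ X` with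
`dom a = dom b = x` and `rg a = rg b = y`. -/
def Splits (X : Set Atom) (x y : Atom) : Prop :=
  ∃ a ∈ X, ∃ b ∉ X, a.dom = x ∧ a.rg = y ∧ b.dom = x ∧ b.rg = y

/-- The pair `(x,y)` is splitable if `x ≠ y` and there are two distinct
elements `a ≠ b` of `S` with `dom a = dom b = x` and `rg a = rg b = y`. -/
def Splitable (x y : Atom) : Prop :=
  x ≠ y ∧ ∃ a b : Atom, a ≠ b ∧ a.dom = x ∧ a.rg = y ∧ b.dom = x ∧ b.rg = y

/-! The triples of `P` all fit together as triangles of arrows, and on diversity atoms fitting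
together is all that `P` asks for. Whether a diversity atom lies in `X ; Y` therefore depends only
on its domain and range, and an atom between distinct identity atoms is a diversity atom. -/

namespace Atom

@[simp]
theorem dom_dom (a : Atom) : a.dom.dom = a.dom := by cases a <;> rfl

@[simp]
theorem rg_dom (a : Atom) : a.dom.rg = a.dom := by cases a <;> rfl

@[simp]
theorem dom_rg (a : Atom) : a.rg.dom = a.rg := by cases a <;> rfl

@[simp]
theorem rg_rg (a : Atom) : a.rg.rg = a.rg := by cases a <;> rfl

@[simp]
theorem dom_cnv (a : Atom) : a.cnv.dom = a.rg := by cases a <;> rfl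

@[simp]
theorem rg_cnv (a : Atom) : a.cnv.rg = a.dom := by cases a <;> rfl

theorem dom_eq_rg_of_isId {a : Atom} (ha : a.isId) : a.dom = a.rg := by
  cases a with
  | id => rfl
  | r | rc | w => exact ha.elim

/-- The atoms `a`, `b`, `c` fit together as the sides of a triangle, `c` running from the source
of `a` to the target of `b`. -/
def IsTriangle (a b c : Atom) : Prop := a.dom = c.dom ∧ a.rg = b.dom ∧ b.rg = c.rg

theorem IsTriangle.congr_right {a b u v : Atom} (h : IsTriangle a b u) (hdom : u.dom = v.dom)
    (hrg : u.rg = v.rg) : IsTriangle a b v :=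
  ⟨h.1.trans hdom, h.2.1, h.2.2.trans hrg⟩

end Atom

open Atom

theorem Prel.isTriangle {a b c : Atom} (h : Prel a b c) : IsTriangle a b c := by
  rcases h with ⟨rfl, rfl⟩ | ⟨rfl, rfl⟩ | ⟨rfl, rfl⟩ | ⟨-, -, -, h⟩
  · simp [IsTriangle]
  · simp [IsTriangle]
  · simp [IsTriangle]
  · exact h

theorem Atom.IsTriangle.prel {a b c : Atom} (h : IsTriangle a b c) (ha : ¬ a.isId)
    (hb : ¬ b.isId) (hc : ¬ c.isId) : Prel a b c :=
  .inr <| .inr <| .inr ⟨ha, hb, hc, h⟩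

theorem mP_iff_prel {a b c : Atom} : mP a b c ↔ Prel a b c := Iff.rfl

theorem mem_sComp_of_dom_eq_of_rg_eq {X Y : Set Atom} (hX : ∀ a ∈ X, ¬ a.isId)
    (hY : ∀ b ∈ Y, ¬ b.isId) {u v : Atom} (hu : u ∈ sComp X Y) (hv : ¬ v.isId)
    (hdom : u.dom = v.dom) (hrg : u.rg = v.rg) : v ∈ sComp X Y := by
  obtain ⟨a, ha, b, hb, hP⟩ := hu
  have htri : IsTriangle a b v := (mP_iff_prel.mp hP).isTriangle.congr_right hdom hrg
  exact ⟨a, ha, b, hb, mP_iff_prel.mpr (htri.prel (hX a ha) (hY b hb) hv)⟩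

theorem not_splits_iff {X : Set Atom} {x y : Atom} :
    ¬ Splits X x y ↔
      ((∃ u ∈ X, u.dom = x ∧ u.rg = y) → ∀ v : Atom, v.dom = x → v.rg = y → v ∈ X) := by
  constructor
  · rintro hns ⟨u, hu, hux, huy⟩ v hvx hvy
    by_contra hv
    exact hns ⟨u, hu, v, hv, hux, huy, hvx, hvy⟩
  · rintro hall ⟨u, hu, v, hv, hux, huy, hvx, hvy⟩
    exact hv (hall ⟨u, hu, hux, huy⟩ v hvx hvy)

/-- In `Z`, for all `X, Y ⊆ S ∖ I` and all distinct `x, y ∈ I`: if `X;Y`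
contains some element `u` with `dom u = x` and `rg u = y`, then `X;Y` contains
every element `v ∈ S` with `dom v = x` and `rg v = y`.  In particular, the
composition of two sets of diversity atoms splits no pair of distinct identity
atoms. -/
theorem stmt_2 (X Y : Set Atom)
    (hX : ∀ a ∈ X, ¬ a.isId) (hY : ∀ a ∈ Y, ¬ a.isId)
    (x y : Atom) (hx : x.isId) (hy : y.isId) (hxy : x ≠ y) :
    ((∃ u ∈ sComp X Y, u.dom = x ∧ u.rg = y) →
      ∀ v : Atom, v.dom = x → v.rg = y → v ∈ sComp X Y) ∧
    ¬ Splits (sComp X Y) x y := by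
  rw [not_splits_iff, and_self]
  rintro ⟨u, hu, hux, huy⟩ v hvx hvy
  have hv : ¬ v.isId := fun h => hxy (hvx ▸ hvy ▸ dom_eq_rg_of_isId h)
  exact mem_sComp_of_dom_eq_of_rg_eq hX hY hu hv (hux.trans hvx.symm) (huy.trans hvy.symm)
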